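/- Global unique continuation from the exterior: Let d ≥ 1, h > 0, s ∈ (0,1) and R ≥ h. Suppose u : ℤ^d → ℝ satisfies u_j = 0 and (−Δ_d)^s u_j = 0 for every j ∈ ℤ^d with |hj| ≥ R (i.e. u and (−Δ_d)^s u vanish on (hℤ)^d outside the Euclidean ball B_R of radius R centered at the origin; since u then has finite support it belongs to ℓ_s, so (−Δ_d)^s u is defined). Then u ≡ 0 on ℤ^d. -/

import Mathlib

open scoped BigOperators
open MeasureTheory

/-- Modified Bessel function of the first kind of integer order `k`. -/
noncomputable def besselI (k : ℤ) (t : ℝ) : ℝ :=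
  ∑' ℓ : ℕ, (t / 2) ^ (2 * ℓ + k.natAbs) /
    ((Nat.factorial ℓ : ℝ) * Real.Gamma ((ℓ : ℝ) + (k.natAbs : ℝ) + 1))

/-- Semidiscrete heat kernel `G(m,t) = e^{-2dt} ∏ I_{m_i}(2t)` on `ℤ^d`. -/
noncomputable def heatG (d : ℕ) (m : Fin d → ℤ) (t : ℝ) : ℝ :=
  Real.exp (-(2 * (d : ℝ) * t)) * ∏ i, besselI (m i) (2 * t)

/-- The discrete kernel `K_s^h(m)`, with `K_s^h(0) = 0`. -/
noncomputable def Ksh (d : ℕ) (h s : ℝ) (m : Fin d → ℤ) : ℝ :=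
  if m = 0 then 0
  else h ^ (-(2 * s)) * |Real.Gamma (-s)|⁻¹ *
    ∫ t in Set.Ioi (0 : ℝ), heatG d m t / t ^ (1 + s)

/-- Membership in the space `ℓ_s`. -/
def memLs (d : ℕ) (s : ℝ) (u : (Fin d → ℤ) → ℝ) : Prop :=
  Summable fun m : Fin d → ℤ =>
    |u m| * (1 + Real.sqrt (∑ i, ((m i : ℝ)) ^ 2)) ^ (-((d : ℝ) + 2 * s))

/-- The fractional discrete Laplacian `(-Δ_d)^s u_j = ∑_{m} (u_j - u_m) K_s^h(j-m)`
(the `m = j` term vanishes since `K_s^h(0) = 0`). -/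
noncomputable def fracLap (d : ℕ) (h s : ℝ) (u : (Fin d → ℤ) → ℝ) (j : Fin d → ℤ) : ℝ :=
  ∑' m : Fin d → ℤ, (u j - u m) * Ksh d h s (j - m)

/-!
Let `U` be the Fourier transform of `u` on the torus of tuples `z` of unit complex numbers. There
`(-Δ_d)^s` acts as multiplication by `h ^ (-2 * s) * Λ z ^ s`, where
`Λ z = ∑ i, (2 - 2 * Re (z i))`: the generating function of the Bessel functions identifies the
Fourier transform of the heat kernel as `exp (-t * Λ z)`, and integrating `1 - exp (-t * Λ z)`
against `t ^ (-1 - s)` gives a multiple of `Λ z ^ s`.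

If `u` and `(-Δ_d)^s u` both have finite support, their transforms are trigonometric polynomials.
Along the line `x ↦ (exp (i * x * w j))_j` we have `Λ = x ^ 2 * S x` with `S` continuous and
`S 0 > 0`, so the two transforms are analytic functions of `x` which differ by a factor
`|x| ^ (2 * s)` times a continuous function that does not vanish at `0`. If `U` were not
identically zero along the line, comparing the orders of vanishing and the signs on both sides of
`x = 0` would force `2 * s` to be an even integer, which is impossible for `0 < s < 1`. Such lines
cover the torus, so `U = 0`, and `u = 0` because distinct characters are linearly independent.
-/

section Bessel

/-- The `ℓ`-th term of the power series defining `besselI k t`, with the Gamma value written as a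
factorial. -/
noncomputable def besselTerm (k : ℤ) (ℓ : ℕ) (t : ℝ) : ℝ :=
  (t / 2) ^ (2 * ℓ + k.natAbs) / (ℓ.factorial * (ℓ + k.natAbs).factorial)

lemma besselI_eq_tsum_besselTerm (k : ℤ) (t : ℝ) : besselI k t = ∑' ℓ, besselTerm k ℓ t := by
  simp only [besselI, besselTerm, ← Nat.cast_add, Real.Gamma_nat_eq_factorial]

lemma besselTerm_nonneg (k : ℤ) (ℓ : ℕ) {t : ℝ} (ht : 0 ≤ t) : 0 ≤ besselTerm k ℓ t := by
  unfold besselTerm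
  positivity

/-- The bijection `(a, b) ↦ (a - b, min a b)`, which collects the monomials `z ^ a * z⁻¹ ^ b` of a
product of two power series according to their exponent `a - b`. -/
def natProdEquivIntProdNat : ℕ × ℕ ≃ ℤ × ℕ where
  toFun p := ((p.1 : ℤ) - p.2, min p.1 p.2)
  invFun q := (q.2 + q.1.toNat, q.2 + (-q.1).toNat)
  left_inv p := by ext <;> dsimp only <;> omega
  right_inv q := by ext <;> dsimp only <;> omega

lemma besselTerm_sub_min (a b : ℕ) (t : ℝ) :
    besselTerm (a - b) (min a b) t = (t / 2) ^ a / a.factorial * ((t / 2) ^ b / b.factorial) := by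
  have hexp : 2 * min a b + ((a : ℤ) - b).natAbs = a + b := by omega
  have hmax : min a b + ((a : ℤ) - b).natAbs = max a b := by omega
  rw [besselTerm, hexp, hmax, pow_add, div_mul_div_comm]
  rcases le_total a b with hab | hab
  · rw [min_eq_left hab, max_eq_right hab]
  · rw [min_eq_right hab, max_eq_left hab, mul_comm (b.factorial : ℝ)]

lemma hasSum_besselTerm_mul_zpow (t : ℝ) {z : ℂ} (hz : z ≠ 0) :
    HasSum (fun q : ℤ × ℕ => (besselTerm q.1 q.2 t : ℂ) * z ^ q.1)
      (Complex.exp (t / 2 * (z + z⁻¹))) := by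
  have hexp (w : ℂ) : HasSum (fun n : ℕ => w ^ n / n.factorial) (Complex.exp w) := by
    rw [Complex.exp_eq_exp_ℂ]
    exact NormedSpace.expSeries_div_hasSum_exp w
  have hsum := summable_mul_of_summable_norm
    (NormedSpace.norm_expSeries_div_summable (t / 2 * z))
    (NormedSpace.norm_expSeries_div_summable (t / 2 * z⁻¹))
  have hprod := (hexp (t / 2 * z)).mul (hexp (t / 2 * z⁻¹)) hsum
  rw [← Complex.exp_add, ← mul_add] at hprod
  rw [← natProdEquivIntProdNat.hasSum_iff]
  refine hprod.congr_fun fun ⟨a, b⟩ => ?_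
  simp only [Function.comp_apply, natProdEquivIntProdNat, Equiv.coe_fn_mk, besselTerm_sub_min,
    zpow_sub₀ hz, zpow_natCast, mul_pow, inv_pow]
  push_cast
  ring

lemma hasSum_besselTerm (k : ℤ) (t : ℝ) : HasSum (fun ℓ => besselTerm k ℓ t) (besselI k t) := by
  have hsum : Summable fun q : ℤ × ℕ => (besselTerm q.1 q.2 t : ℂ) := by
    simpa only [one_zpow, mul_one] using (hasSum_besselTerm_mul_zpow t one_ne_zero).summable
  rw [besselI_eq_tsum_besselTerm]
  exact ((Complex.summable_ofReal.1 hsum).prod_factor k).hasSum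

lemma besselI_nonneg (k : ℤ) {t : ℝ} (ht : 0 ≤ t) : 0 ≤ besselI k t :=
  (hasSum_besselTerm k t).nonneg fun ℓ => besselTerm_nonneg k ℓ ht

lemma one_le_besselI_zero {t : ℝ} (ht : 0 ≤ t) : 1 ≤ besselI 0 t := by
  simpa [besselTerm] using
    le_hasSum (hasSum_besselTerm 0 t) 0 fun ℓ _ => besselTerm_nonneg 0 ℓ ht

lemma measurable_besselI (k : ℤ) : Measurable (besselI k) := by
  unfold besselI
  exact Measurable.tsum fun ℓ => by fun_prop

lemma hasSum_besselI_mul_zpow (t : ℝ) {z : ℂ} (hz : z ≠ 0) :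
    HasSum (fun k : ℤ => (besselI k t : ℂ) * z ^ k) (Complex.exp (t / 2 * (z + z⁻¹))) := by
  refine (hasSum_besselTerm_mul_zpow t hz).prod_fiberwise fun k => ?_
  exact (Complex.hasSum_ofReal.2 (hasSum_besselTerm k t)).mul_right (z ^ k)

end Bessel

lemma hasSum_prod_pi_fin {R : Type*} [NormedCommRing R] [CompleteSpace R] {n : ℕ}
    {α : Fin n → Type*} {f : ∀ i, α i → R} {a : Fin n → R} (hf : ∀ i, HasSum (f i) (a i))
    (hnorm : ∀ i, Summable fun k => ‖f i k‖) :
    HasSum (fun m : ∀ i, α i => ∏ i, f i (m i)) (∏ i, a i) ∧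
      Summable fun m : ∀ i, α i => ‖∏ i, f i (m i)‖ := by
  induction n with
  | zero => simp [Summable.of_finite]
  | succ n ih =>
    obtain ⟨htail, htail_norm⟩ := ih (fun i => hf i.succ) fun i => hnorm i.succ
    rw [Fin.prod_univ_succ, ← (Fin.consEquiv α).hasSum_iff,
      ← (Fin.consEquiv α).summable_iff]
    simp only [Function.comp_def, Fin.consEquiv_apply, Fin.prod_univ_succ, Fin.cons_zero,
      Fin.cons_succ]
    have hsum := summable_mul_of_summable_norm (hnorm 0) htail_norm
    have hprod := (hf 0).mul htail hsum
    have hprod_norm := (hnorm 0).mul_norm htail_norm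
    exact ⟨hprod, hprod_norm⟩

section Fourier

open Real

variable {ι : Type*} [Fintype ι]

/-- The character `z ↦ ∏ i, z i ^ m i` of the torus attached to the lattice point `m`. -/
noncomputable def latticeChar (m : ι → ℤ) : (ι → Circle) →* Circle where
  toFun z := ∏ i, z i ^ m i
  map_one' := by simp
  map_mul' z w := by simp only [Pi.mul_apply, mul_zpow, Finset.prod_mul_distrib]

lemma latticeChar_apply (m : ι → ℤ) (z : ι → Circle) : latticeChar m z = ∏ i, z i ^ m i := rfl

lemma coe_latticeChar (m : ι → ℤ) (z : ι → Circle) :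
    (latticeChar m z : ℂ) = ∏ i, (z i : ℂ) ^ m i :=
  (map_prod Circle.coeHom _ _).trans (Finset.prod_congr rfl fun i _ => Circle.coe_zpow (z i) (m i))

lemma latticeChar_zero (z : ι → Circle) : latticeChar 0 z = 1 := by
  simp [latticeChar_apply]

lemma latticeChar_add (m n : ι → ℤ) (z : ι → Circle) :
    latticeChar (m + n) z = latticeChar m z * latticeChar n z := by
  simp only [latticeChar_apply, Pi.add_apply, zpow_add, Finset.prod_mul_distrib]

lemma latticeChar_circleExp (m : ι → ℤ) (x : ι → ℝ) :
    latticeChar m (fun i => Circle.exp (x i)) = Circle.exp (∑ i, m i * x i) := by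
  simp only [latticeChar_apply, ← Circle.exp_zsmul, zsmul_eq_mul]
  exact (congrArg Additive.toMul (map_sum Circle.expHom _ _)).symm

lemma latticeChar_injective : Function.Injective (latticeChar (ι := ι)) := by
  classical
  intro m n hmn
  ext i
  by_contra hi
  have hsub : (m i - n i : ℝ) ≠ 0 := sub_ne_zero.2 (Int.cast_injective.ne hi)
  let x : ι → ℝ := Pi.single i (π / (m i - n i))
  have hx (k : ι → ℤ) : ∑ j, k j * x j = k i * (π / (m i - n i)) := by
    rw [Finset.sum_eq_single i] <;> simp +contextual [x]
  have hexp := congr($hmn fun j => Circle.exp (x j))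
  rw [latticeChar_circleExp, latticeChar_circleExp, hx, hx, ← div_eq_one, ← Circle.exp_sub,
    ← sub_mul, mul_div_cancel₀ π hsub] at hexp
  exact Circle.exp_pi_ne_one hexp

/-- The Fourier transform `∑ m, f m * z ^ m` on the torus of a function on the lattice. -/
noncomputable def latticeFourier (f : (ι → ℤ) → ℝ) (z : ι → Circle) : ℂ :=
  ∑' m, (f m : ℂ) * latticeChar m z

lemma summable_norm_mul_latticeChar {f : (ι → ℤ) → ℝ} (hf : Summable f) (z : ι → Circle) :
    Summable fun m => ‖(f m : ℂ) * latticeChar m z‖ := by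
  simpa only [norm_mul, Circle.norm_coe, mul_one, Complex.norm_real] using hf.norm

lemma hasSum_latticeFourier {f : (ι → ℤ) → ℝ} (hf : Summable f) (z : ι → Circle) :
    HasSum (fun m => (f m : ℂ) * latticeChar m z) (latticeFourier f z) :=
  (summable_norm_mul_latticeChar hf z).of_norm.hasSum

lemma summable_mul_comp_sub {G : Type*} [AddGroup G] {f g : G → ℝ} (hf : Summable f)
    (hg : Summable g) (j : G) : Summable fun m => f m * g (j - m) := by
  refine Summable.of_norm_bounded (hf.norm.mul_right (∑' k, ‖g k‖)) fun m => ?_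
  rw [norm_mul]
  gcongr
  exact hg.norm.le_tsum (j - m) fun _ _ => norm_nonneg _

lemma hasSum_latticeFourier_convolution {f g : (ι → ℤ) → ℝ} (hf : Summable f) (hg : Summable g)
    (z : ι → Circle) :
    HasSum (fun j => ((∑' m, f m * g (j - m) : ℝ) : ℂ) * latticeChar j z)
      (latticeFourier f z * latticeFourier g z) := by
  have hsum := summable_mul_of_summable_norm (summable_norm_mul_latticeChar hf z)
    (summable_norm_mul_latticeChar hg z)
  have hprod := (hasSum_latticeFourier hf z).mul (hasSum_latticeFourier hg z) hsum
  let e : (ι → ℤ) × (ι → ℤ) ≃ (ι → ℤ) × (ι → ℤ) :=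
    { toFun := fun p => (p.2, p.1 - p.2)
      invFun := fun q => (q.1 + q.2, q.1)
      left_inv := fun p => by simp
      right_inv := fun q => by simp }
  rw [← e.hasSum_iff] at hprod
  refine hprod.prod_fiberwise fun j => ?_
  have hconv := (summable_mul_comp_sub hf hg j).hasSum
  refine ((Complex.hasSum_ofReal.2 hconv).mul_right (latticeChar j z : ℂ)).congr_fun
    fun m => ?_
  have hchar : latticeChar j z = latticeChar m z * latticeChar (j - m) z := by
    rw [← latticeChar_add, add_sub_cancel]
  simp only [e, Function.comp_apply, Equiv.coe_fn_mk, hchar]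
  push_cast
  ring

lemma eq_zero_of_latticeFourier_eq_zero {f : (ι → ℤ) → ℝ} (hf : f.support.Finite)
    (hzero : ∀ z, latticeFourier f z = 0) : f = 0 := by
  have hinj : Function.Injective fun m : ι → ℤ => Circle.coeHom.comp (latticeChar m) :=
    fun m n hmn => latticeChar_injective <| MonoidHom.ext fun z =>
      Circle.coe_injective congr($hmn z)
  have hlin := (linearIndependent_monoidHom (ι → Circle) ℂ).comp _ hinj
  have hsum : ∑ m ∈ hf.toFinset, (f m : ℂ) • (fun z => (latticeChar m z : ℂ)) = 0 := by
    ext z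
    rw [Pi.zero_apply, ← hzero z, latticeFourier, tsum_eq_sum (s := hf.toFinset)]
    · simp
    · simp +contextual
  ext m
  by_contra hm
  exact hm (Complex.ofReal_injective
    (linearIndependent_iff'.1 hlin hf.toFinset (fun m => (f m : ℂ)) hsum m (by simpa using hm)))

end Fourier

section LaplaceSymbol

variable {ι : Type*} [Fintype ι]

/-- The Fourier symbol of minus the discrete Laplacian on the unit lattice; the one of
`fracLap d h s` is `h ^ (-(2 * s))` times its power of exponent `s`. -/
noncomputable def laplaceSymbol (z : ι → Circle) : ℝ :=
  ∑ i, (2 - 2 * (z i : ℂ).re)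

lemma laplaceSymbol_nonneg (z : ι → Circle) : 0 ≤ laplaceSymbol z :=
  Finset.sum_nonneg fun i _ => by linarith [(Complex.re_le_norm (z i)).trans_eq (Circle.norm_coe _)]

lemma laplaceSymbol_one : laplaceSymbol (1 : ι → Circle) = 0 := by
  simp [laplaceSymbol]

lemma sin_eq_mul_sinc (x : ℝ) : Real.sin x = x * Real.sinc x := by
  rcases eq_or_ne x 0 with rfl | hx
  · simp
  · rw [Real.sinc_of_ne_zero hx, mul_div_cancel₀ _ hx]

lemma laplaceSymbol_circleExp (x : ℝ) (w : ι → ℝ) :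
    laplaceSymbol (fun i => Circle.exp (x * w i)) =
      x ^ 2 * ∑ i, (w i * Real.sinc (x * w i / 2)) ^ 2 := by
  simp only [laplaceSymbol, Circle.coe_exp, Complex.exp_ofReal_mul_I_re, Finset.mul_sum]
  refine Finset.sum_congr rfl fun i _ => ?_
  have hcos : Real.cos (x * w i) = 1 - 2 * Real.sin (x * w i / 2) ^ 2 := by
    rw [← mul_div_cancel₀ (x * w i) two_ne_zero, mul_div_assoc, Real.cos_two_mul', Real.cos_sq']
    ring_nf
  rw [hcos, sin_eq_mul_sinc]
  ring

lemma laplaceSymbol_circleExp_rpow (x : ℝ) (w : ι → ℝ) (s : ℝ) :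
    laplaceSymbol (fun i => Circle.exp (x * w i)) ^ s =
      |x| ^ (2 * s) * (∑ i, (w i * Real.sinc (x * w i / 2)) ^ 2) ^ s := by
  rw [laplaceSymbol_circleExp, Real.mul_rpow (sq_nonneg x)
    (Finset.sum_nonneg fun i _ => sq_nonneg _), ← sq_abs, ← Real.rpow_natCast_mul (abs_nonneg x),
    Nat.cast_ofNat]

end LaplaceSymbol

section HeatKernel

variable {d : ℕ} (m : Fin d → ℤ) {t : ℝ}

lemma measurable_heatG : Measurable (heatG d m) := by
  unfold heatG
  have := fun i => (measurable_besselI (m i)).comp (measurable_const_mul (2 : ℝ))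
  fun_prop

lemma heatG_nonneg (ht : 0 ≤ t) : 0 ≤ heatG d m t :=
  mul_nonneg (Real.exp_nonneg _) (Finset.prod_nonneg fun i _ => besselI_nonneg _ (by positivity))

lemma exp_le_heatG_zero (ht : 0 ≤ t) : Real.exp (-(2 * d * t)) ≤ heatG d 0 t :=
  le_mul_of_one_le_right (Real.exp_nonneg _)
    (Finset.one_le_prod fun _ _ => one_le_besselI_zero (by positivity))

lemma hasSum_heatG_mul_latticeChar (t : ℝ) (z : Fin d → Circle) :
    HasSum (fun m => (heatG d m t : ℂ) * latticeChar m z) (Real.exp (-(laplaceSymbol z * t))) := by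
  have hfactor (i : Fin d) : HasSum (fun k : ℤ => (besselI k (2 * t) : ℂ) * (z i : ℂ) ^ k)
      (Real.exp (2 * t * (z i : ℂ).re)) := by
    have hexp : t * ((z i : ℂ) + (z i : ℂ)⁻¹) = (2 * t * (z i : ℂ).re : ℝ) := by
      rw [← Circle.coe_inv, Circle.coe_inv_eq_conj, Complex.add_conj]
      push_cast
      ring
    rw [Complex.ofReal_exp, ← hexp, ← mul_div_cancel_left₀ (t : ℂ) two_ne_zero]
    exact_mod_cast hasSum_besselI_mul_zpow (2 * t) (Circle.coe_ne_zero (z i))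
  have hvalue : Real.exp (-(laplaceSymbol z * t)) =
      Real.exp (-(2 * d * t)) * ∏ i, Real.exp (2 * t * (z i : ℂ).re) := by
    rw [← Real.exp_sum, ← Real.exp_add]
    simp only [laplaceSymbol, Finset.sum_sub_distrib, Finset.sum_const, Finset.card_univ,
      Fintype.card_fin, nsmul_eq_mul, ← Finset.mul_sum]
    ring_nf
  have hprod := (hasSum_prod_pi_fin hfactor fun i => (hfactor i).summable.norm).1
  rw [hvalue]
  push_cast at hprod ⊢
  refine (hprod.mul_left _).congr_fun fun m => ?_
  rw [heatG, coe_latticeChar, Finset.prod_mul_distrib]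
  push_cast
  ring

lemma hasSum_heatG (t : ℝ) : HasSum (fun m => heatG d m t) 1 := by
  simpa only [laplaceSymbol_one, zero_mul, neg_zero, Real.exp_zero, map_one, Circle.coe_one,
    mul_one, Complex.hasSum_ofReal] using hasSum_heatG_mul_latticeChar t (1 : Fin d → Circle)

lemma sum_heatG_le {S : Finset (Fin d → ℤ)} (hS : 0 ∉ S) (ht : 0 ≤ t) :
    ∑ m ∈ S, heatG d m t ≤ 1 - Real.exp (-(2 * d * t)) := by
  have h := sum_le_hasSum (insert 0 S) (fun m _ => heatG_nonneg m ht) (hasSum_heatG t)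
  rw [Finset.sum_insert hS] at h
  linarith [exp_le_heatG_zero (d := d) ht]

end HeatKernel

section SubordinationIntegral

open Set Filter Topology

variable {a s : ℝ}

lemma integrableOn_one_sub_exp_neg_mul_div_rpow (ha : 0 ≤ a) (hs : s ∈ Ioo 0 1) :
    IntegrableOn (fun t => (1 - Real.exp (-(a * t))) / t ^ (1 + s)) (Ioi 0) := by
  have hmeas : Measurable fun t : ℝ => (1 - Real.exp (-(a * t))) / t ^ (1 + s) := by fun_prop
  have hnonneg {t : ℝ} (ht : 0 < t) : 0 ≤ 1 - Real.exp (-(a * t)) :=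
    sub_nonneg.2 (Real.exp_le_one_iff.2 (neg_nonpos.2 (by positivity)))
  rw [← Ioc_union_Ioi_eq_Ioi zero_le_one, integrableOn_union]
  constructor
  · have hrpow : IntegrableOn (fun t : ℝ => t ^ (-s)) (Ioc 0 1) :=
      (intervalIntegral.intervalIntegrable_rpow' (by linarith [hs.2])).1
    refine (hrpow.const_mul a).mono' hmeas.aestronglyMeasurable ?_
    filter_upwards [ae_restrict_mem measurableSet_Ioc] with t ht
    rw [Real.norm_of_nonneg (div_nonneg (hnonneg ht.1) (Real.rpow_nonneg ht.1.le _)),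
      Real.rpow_add ht.1, Real.rpow_one, Real.rpow_neg ht.1.le, ← div_div,
      div_eq_mul_inv _ (t ^ s)]
    refine mul_le_mul_of_nonneg_right ((div_le_iff₀ ht.1).2 ?_)
      (inv_nonneg.2 (Real.rpow_nonneg ht.1.le s))
    linarith [Real.one_sub_le_exp_neg (a * t)]
  · refine (integrableOn_Ioi_rpow_of_lt (by linarith [hs.1] : -(1 + s) < -1) one_pos).mono'
      hmeas.aestronglyMeasurable ?_
    filter_upwards [ae_restrict_mem measurableSet_Ioi] with t ht
    have ht0 : 0 < t := one_pos.trans ht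
    rw [Real.norm_of_nonneg (div_nonneg (hnonneg ht0) (Real.rpow_nonneg ht0.le _)),
      Real.rpow_neg ht0.le, ← one_div]
    gcongr
    exact sub_le_self _ (Real.exp_nonneg _)

lemma tendsto_rpow_nhdsGT_zero {q : ℝ} (hq : 0 < q) :
    Tendsto (fun x : ℝ => x ^ q) (𝓝[>] 0) (𝓝 0) := by
  have h := (Real.continuousAt_rpow_const 0 q (Or.inr hq.le)).tendsto
  rw [Real.zero_rpow hq.ne'] at h
  exact h.mono_left nhdsWithin_le_nhds

lemma tendsto_one_sub_exp_neg_mul_mul_rpow_neg_nhdsGT_zero (a : ℝ) (hs : s < 1) :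
    Tendsto (fun t => (1 - Real.exp (-(a * t))) * t ^ (-s)) (𝓝[>] 0) (𝓝 0) := by
  have hslope : Tendsto (fun t : ℝ => (1 - Real.exp (-(a * t))) / t) (𝓝[>] 0) (𝓝 a) := by
    have hderiv : HasDerivAt (fun t => 1 - Real.exp (-(a * t))) a 0 := by
      simpa using ((((hasDerivAt_id (0 : ℝ)).const_mul a).neg).exp).const_sub 1
    simpa [div_eq_inv_mul] using hderiv.tendsto_slope_zero_right
  have hprod := hslope.mul (tendsto_rpow_nhdsGT_zero (sub_pos.2 hs))
  rw [mul_zero] at hprod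
  refine hprod.congr' ?_
  filter_upwards [self_mem_nhdsWithin] with t (ht : 0 < t)
  rw [sub_eq_add_neg 1 s, Real.rpow_add ht, Real.rpow_one]
  field_simp

lemma tendsto_one_sub_exp_neg_mul_mul_rpow_neg_atTop (ha : 0 < a) (hs : 0 < s) :
    Tendsto (fun t => (1 - Real.exp (-(a * t))) * t ^ (-s)) atTop (𝓝 0) := by
  have hexp : Tendsto (fun t => 1 - Real.exp (-(a * t))) atTop (𝓝 (1 - 0)) :=
    (Real.tendsto_exp_neg_atTop_nhds_zero.comp (tendsto_id.const_mul_atTop ha)).const_sub 1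
  simpa using hexp.mul (tendsto_rpow_neg_atTop hs)

lemma Gamma_one_sub_eq_mul_abs (hs : s ∈ Ioo 0 1) :
    Real.Gamma (1 - s) = s * |Real.Gamma (-s)| := by
  have hrec : Real.Gamma (1 - s) = -s * Real.Gamma (-s) := by
    rw [← Real.Gamma_add_one (neg_ne_zero.2 hs.1.ne'), neg_add_eq_sub]
  have hpos : 0 < Real.Gamma (1 - s) := Real.Gamma_pos_of_pos (sub_pos.2 hs.2)
  rw [← abs_of_pos hpos, hrec, abs_mul, abs_neg, abs_of_pos hs.1]

lemma integral_one_sub_exp_neg_mul_div_rpow (ha : 0 ≤ a) (hs : s ∈ Ioo 0 1) :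
    ∫ t in Ioi 0, (1 - Real.exp (-(a * t))) / t ^ (1 + s) = |Real.Gamma (-s)| * a ^ s := by
  rcases ha.eq_or_lt with rfl | ha
  · simp [Real.zero_rpow hs.1.ne']
  have hu (t : ℝ) : HasDerivAt (fun t => 1 - Real.exp (-(a * t))) (a * Real.exp (-(a * t))) t :=
    (((hasDerivAt_id t).const_mul a).neg.exp.const_sub 1).congr_deriv (by simp [mul_comm])
  have hv (t : ℝ) (ht : 0 < t) : HasDerivAt (fun t => t ^ (-s)) (-s * t ^ (-s - 1)) t :=
    Real.hasDerivAt_rpow_const (Or.inl ht.ne')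
  have huv' : EqOn (fun t => -s * ((1 - Real.exp (-(a * t))) / t ^ (1 + s)))
      (fun t => (1 - Real.exp (-(a * t))) * (-s * t ^ (-s - 1))) (Ioi 0) := fun t ht => by
    dsimp only
    rw [← neg_add', add_comm s, Real.rpow_neg (le_of_lt ht)]
    ring
  have hu'v (t : ℝ) : a * (t ^ (-s) * Real.exp (-(a * t))) =
      a * Real.exp (-(a * t)) * t ^ (-s) := by ring
  have hgamma := Real.integral_rpow_mul_exp_neg_mul_Ioi (sub_pos.2 hs.2) ha
  rw [sub_sub_cancel_left] at hgamma
  have hgamma_int : IntegrableOn (fun t => t ^ (-s) * Real.exp (-(a * t))) (Ioi 0) := by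
    refine Integrable.of_integral_ne_zero (hgamma.trans_ne ?_)
    have := Real.Gamma_pos_of_pos (sub_pos.2 hs.2)
    positivity
  have hparts := integral_Ioi_mul_deriv_eq_deriv_mul (fun t _ => hu t) hv
    (IntegrableOn.congr_fun
      ((integrableOn_one_sub_exp_neg_mul_div_rpow ha.le hs).const_mul (-s)) huv' measurableSet_Ioi)
    ((hgamma_int.const_mul a).congr (.of_forall hu'v))
    (tendsto_one_sub_exp_neg_mul_mul_rpow_neg_nhdsGT_zero a hs.2)
    (tendsto_one_sub_exp_neg_mul_mul_rpow_neg_atTop ha hs.1)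
  rw [← setIntegral_congr_fun measurableSet_Ioi huv', integral_const_mul] at hparts
  simp only [← hu'v, integral_const_mul, hgamma, Gamma_one_sub_eq_mul_abs hs, one_div,
    Real.inv_rpow ha.le, Real.rpow_sub ha, Real.rpow_one, sub_self, zero_sub] at hparts
  refine mul_left_cancel₀ (neg_ne_zero.2 hs.1.ne') (hparts.trans ?_)
  field_simp

end SubordinationIntegral

section Kernel

open Set

variable {d : ℕ} {s : ℝ}

lemma measurable_heatG_div_rpow (m : Fin d → ℤ) (s : ℝ) :
    Measurable fun t => heatG d m t / t ^ (1 + s) :=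
  (measurable_heatG m).div (by fun_prop)

lemma heatG_div_rpow_nonneg (m : Fin d → ℤ) (s : ℝ) {t : ℝ} (ht : 0 < t) :
    0 ≤ heatG d m t / t ^ (1 + s) :=
  div_nonneg (heatG_nonneg m ht.le) (Real.rpow_nonneg ht.le _)

lemma sum_heatG_div_rpow_le {S : Finset (Fin d → ℤ)} (hS : 0 ∉ S) {t : ℝ} (ht : 0 < t) :
    ∑ m ∈ S, heatG d m t / t ^ (1 + s) ≤ (1 - Real.exp (-(2 * d * t))) / t ^ (1 + s) := by
  rw [← Finset.sum_div]
  gcongr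
  exact sum_heatG_le hS ht.le

lemma integrableOn_heatG_div_rpow {m : Fin d → ℤ} (hm : m ≠ 0) (hs : s ∈ Ioo 0 1) :
    IntegrableOn (fun t => heatG d m t / t ^ (1 + s)) (Ioi 0) := by
  refine (integrableOn_one_sub_exp_neg_mul_div_rpow (a := 2 * d) (by positivity) hs).mono'
    (measurable_heatG_div_rpow m s).aestronglyMeasurable ?_
  filter_upwards [ae_restrict_mem measurableSet_Ioi] with t (ht : 0 < t)
  rw [Real.norm_of_nonneg (heatG_div_rpow_nonneg m s ht)]
  simpa using sum_heatG_div_rpow_le (S := {m}) (by simpa using hm.symm) ht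

lemma summable_integral_heatG_div_rpow (d : ℕ) (hs : s ∈ Ioo 0 1) :
    Summable fun m : {m : Fin d → ℤ // m ≠ 0} => ∫ t in Ioi 0, heatG d m t / t ^ (1 + s) := by
  refine summable_of_sum_le
    (fun m => setIntegral_nonneg measurableSet_Ioi fun t => heatG_div_rpow_nonneg m.1 s)
    (c := ∫ t in Ioi 0, (1 - Real.exp (-(2 * d * t))) / t ^ (1 + s)) fun S => ?_
  have hint (m : {m : Fin d → ℤ // m ≠ 0}) := integrableOn_heatG_div_rpow m.2 hs
  rw [← integral_finsetSum S fun m _ => hint m]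
  refine setIntegral_mono_on (integrable_finsetSum S fun m _ => hint m)
    (integrableOn_one_sub_exp_neg_mul_div_rpow (by positivity) hs) measurableSet_Ioi fun t ht => ?_
  simpa using sum_heatG_div_rpow_le (S := S.map (.subtype _)) (by simp) ht

lemma Ksh_zero (d : ℕ) (h s : ℝ) : Ksh d h s 0 = 0 := if_pos rfl

lemma Ksh_of_ne_zero {m : Fin d → ℤ} (hm : m ≠ 0) (h s : ℝ) :
    Ksh d h s m = h ^ (-(2 * s)) * |Real.Gamma (-s)|⁻¹ *
      ∫ t in Ioi 0, heatG d m t / t ^ (1 + s) := if_neg hm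

lemma hasSum_subtype_ne_zero_iff {α E : Type*} [Zero α] [AddCommMonoid E] [TopologicalSpace E]
    {f : α → E} (hf : f 0 = 0) {a : E} :
    HasSum (fun x : {x : α // x ≠ 0} => f x) a ↔ HasSum f a :=
  hasSum_subtype_iff_of_support_subset (s := {x | x ≠ 0}) fun _ hx h0 => hx (h0 ▸ hf)

lemma summable_Ksh (d : ℕ) (h : ℝ) (hs : s ∈ Ioo 0 1) : Summable (Ksh d h s) := by
  have hsum : Summable fun m : {m : Fin d → ℤ // m ≠ 0} => Ksh d h s m := by
    simpa only [fun m : {m : Fin d → ℤ // m ≠ 0} => Ksh_of_ne_zero m.2 h s] using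
      (summable_integral_heatG_div_rpow d hs).mul_left _
  exact ((hasSum_subtype_ne_zero_iff (Ksh_zero d h s)).1 hsum.hasSum).summable

lemma hasSum_one_sub_latticeChar_mul_heatG (t : ℝ) (z : Fin d → Circle) :
    HasSum (fun m : {m : Fin d → ℤ // m ≠ 0} => (1 - latticeChar m.1 z : ℂ) * heatG d m t)
      (1 - Real.exp (-(laplaceSymbol z * t)) : ℝ) := by
  rw [hasSum_subtype_ne_zero_iff (f := fun m => (1 - latticeChar m z : ℂ) * heatG d m t)
    (by simp [latticeChar_zero])]
  have hsub := (Complex.hasSum_ofReal.2 (hasSum_heatG t)).sub (hasSum_heatG_mul_latticeChar t z)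
  rw [← Complex.ofReal_sub] at hsub
  exact hsub.congr_fun fun m => by ring

lemma integrableOn_one_sub_latticeChar_mul (z : Fin d → Circle) {m : Fin d → ℤ} (hm : m ≠ 0)
    (hs : s ∈ Ioo 0 1) :
    IntegrableOn (fun t => (1 - latticeChar m z : ℂ) * ↑(heatG d m t / t ^ (1 + s))) (Ioi 0) :=
  (integrableOn_heatG_div_rpow hm hs).ofReal.const_mul _

lemma summable_integral_norm_one_sub_latticeChar_mul (z : Fin d → Circle) (hs : s ∈ Ioo 0 1) :
    Summable fun m : {m : Fin d → ℤ // m ≠ 0} =>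
      ∫ t in Ioi 0, ‖(1 - latticeChar m.1 z : ℂ) * ↑(heatG d m t / t ^ (1 + s))‖ := by
  refine ((summable_integral_heatG_div_rpow d hs).mul_left 2).of_nonneg_of_le
    (fun m => integral_nonneg fun t => norm_nonneg _) fun m => ?_
  have hle : ‖(1 - latticeChar m.1 z : ℂ)‖ ≤ 2 := by
    simpa only [norm_one, Circle.norm_coe, one_add_one_eq_two] using
      norm_sub_le (1 : ℂ) (latticeChar m.1 z)
  rw [← integral_const_mul]
  refine setIntegral_mono_on (integrableOn_one_sub_latticeChar_mul z m.2 hs).norm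
    ((integrableOn_heatG_div_rpow m.2 hs).const_mul 2) measurableSet_Ioi fun t ht => ?_
  rw [norm_mul, Complex.norm_real, Real.norm_of_nonneg (heatG_div_rpow_nonneg m.1 s ht)]
  exact mul_le_mul_of_nonneg_right hle (heatG_div_rpow_nonneg m.1 s ht)

lemma hasSum_one_sub_latticeChar_mul_integral (z : Fin d → Circle) (hs : s ∈ Ioo 0 1) :
    HasSum (fun m : {m : Fin d → ℤ // m ≠ 0} =>
        (1 - latticeChar m.1 z : ℂ) * ↑(∫ t in Ioi 0, heatG d m t / t ^ (1 + s)))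
      (|Real.Gamma (-s)| * laplaceSymbol z ^ s : ℝ) := by
  have hvalue : ∫ t in Ioi 0, (∑' m : {m : Fin d → ℤ // m ≠ 0},
      (1 - latticeChar m.1 z : ℂ) * ↑(heatG d m t / t ^ (1 + s))) =
      (|Real.Gamma (-s)| * laplaceSymbol z ^ s : ℝ) := by
    rw [← integral_one_sub_exp_neg_mul_div_rpow (laplaceSymbol_nonneg z) hs,
      ← integral_complex_ofReal]
    refine integral_congr_ae (.of_forall fun t => HasSum.tsum_eq ?_)
    have hdiv := (hasSum_one_sub_latticeChar_mul_heatG t z).div_const ((t ^ (1 + s) : ℝ) : ℂ)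
    simpa only [Complex.ofReal_div, mul_div_assoc] using hdiv
  have hsum := hasSum_integral_of_summable_integral_norm
    (fun m => integrableOn_one_sub_latticeChar_mul z m.2 hs)
    (summable_integral_norm_one_sub_latticeChar_mul z hs)
  simpa only [integral_const_mul, integral_complex_ofReal, hvalue] using hsum

lemma hasSum_one_sub_latticeChar_mul_Ksh (h : ℝ) (z : Fin d → Circle) (hs : s ∈ Ioo 0 1) :
    HasSum (fun m => (1 - latticeChar m z : ℂ) * Ksh d h s m)
      (h ^ (-(2 * s)) * laplaceSymbol z ^ s : ℝ) := by
  rw [← hasSum_subtype_ne_zero_iff (by simp [Ksh_zero])]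
  have hgamma : |Real.Gamma (-s)| ≠ 0 := by
    refine right_ne_zero_of_mul (a := s) ?_
    rw [← Gamma_one_sub_eq_mul_abs hs]
    exact (Real.Gamma_pos_of_pos (sub_pos.2 hs.2)).ne'
  have hsum := (hasSum_one_sub_latticeChar_mul_integral z hs).mul_left
    ((h ^ (-(2 * s)) * |Real.Gamma (-s)|⁻¹ : ℝ) : ℂ)
  rw [← Complex.ofReal_mul, mul_assoc, inv_mul_cancel_left₀ hgamma] at hsum
  refine hsum.congr_fun fun m => ?_
  rw [Ksh_of_ne_zero m.2]
  push_cast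
  ring

end Kernel

section Multiplier

open Set

variable {d : ℕ} {s : ℝ} {u : (Fin d → ℤ) → ℝ}

lemma fracLap_eq_sub_tsum (h : ℝ) (hs : s ∈ Ioo 0 1) (hu : Summable u) (j : Fin d → ℤ) :
    fracLap d h s u j = (∑' m, Ksh d h s m) * u j - ∑' m, u m * Ksh d h s (j - m) := by
  have hK := summable_Ksh d h hs
  have hconst : HasSum (fun m => u j * Ksh d h s (j - m)) (u j * ∑' m, Ksh d h s m) :=
    ((Equiv.subLeft j).hasSum_iff.2 hK.hasSum).mul_left (u j)
  simpa only [fracLap, sub_mul, mul_comm (u j)] using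
    (hconst.sub (summable_mul_comp_sub hu hK j).hasSum).tsum_eq

lemma latticeFourier_fracLap (h : ℝ) (hs : s ∈ Ioo 0 1) (hu : Summable u) (z : Fin d → Circle) :
    latticeFourier (fracLap d h s u) z =
      (h ^ (-(2 * s)) * laplaceSymbol z ^ s : ℝ) * latticeFourier u z := by
  have hK := summable_Ksh d h hs
  have hsymbol : (∑' m, Ksh d h s m : ℝ) - latticeFourier (Ksh d h s) z =
      (h ^ (-(2 * s)) * laplaceSymbol z ^ s : ℝ) := by
    refine (((Complex.hasSum_ofReal.2 hK.hasSum).sub (hasSum_latticeFourier hK z)).congr_fun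
      fun m => ?_).unique (hasSum_one_sub_latticeChar_mul_Ksh h z hs)
    ring
  rw [← hsymbol, sub_mul, mul_comm (latticeFourier (Ksh d h s) z)]
  have hsub := ((hasSum_latticeFourier hu z).mul_left ((∑' m, Ksh d h s m : ℝ) : ℂ)).sub
    (hasSum_latticeFourier_convolution hu hK z)
  refine (hsub.congr_fun fun j => ?_).tsum_eq
  rw [fracLap_eq_sub_tsum h hs hu j]
  push_cast
  ring

end Multiplier

section AnalyticOrder

open Filter Topology

variable {E : Type*} [NormedAddCommGroup E] [NormedSpace ℝ E]

lemma eq_zero_of_tendsto_of_eventuallyEq_rpow_smul {f g : ℝ → E} {a b : E} {q : ℝ} (hq : 0 < q)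
    (hf : Tendsto f (𝓝[>] 0) (𝓝 a)) (hg : Tendsto g (𝓝[>] 0) (𝓝 b))
    (hfg : ∀ᶠ x in 𝓝[>] 0, f x = x ^ q • g x) : a = 0 := by
  have hlim := ((tendsto_rpow_nhdsGT_zero hq).smul hg).congr' (hfg.mono fun x hx => hx.symm)
  rw [zero_smul] at hlim
  exact tendsto_nhds_unique hf hlim

lemma exponent_eq_zero_of_eventuallyEq_rpow_smul {f g : ℝ → E} {a b : E} {q : ℝ}
    (hf : Tendsto f (𝓝[>] 0) (𝓝 a)) (hg : Tendsto g (𝓝[>] 0) (𝓝 b)) (ha : a ≠ 0) (hb : b ≠ 0)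
    (hfg : ∀ᶠ x in 𝓝[>] 0, f x = x ^ q • g x) : q = 0 := by
  refine le_antisymm (not_lt.1 fun hq => ha ?_) (not_lt.1 fun hq => hb ?_)
  · exact eq_zero_of_tendsto_of_eventuallyEq_rpow_smul hq hf hg hfg
  · refine eq_zero_of_tendsto_of_eventuallyEq_rpow_smul (neg_pos.2 hq) hg hf ?_
    filter_upwards [hfg, self_mem_nhdsWithin] with x hx (hx0 : 0 < x)
    rw [hx, smul_smul, ← Real.rpow_add hx0, neg_add_cancel, Real.rpow_zero, one_smul]

lemma exists_even_of_zpow_smul_eventuallyEq_abs_rpow_smul {f g : ℝ → E} {m : ℤ} {p : ℝ}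
    (hf : ContinuousAt f 0) (hg : ContinuousAt g 0) (hf0 : f 0 ≠ 0) (hg0 : g 0 ≠ 0)
    (hfg : ∀ᶠ x in 𝓝[≠] 0, x ^ m • f x = |x| ^ p • g x) : Even m ∧ p = m := by
  have hpos : ∀ᶠ x : ℝ in 𝓝[>] 0, f x = x ^ (p - m) • g x := by
    filter_upwards [hfg.filter_mono (nhdsGT_le_nhdsNE 0), self_mem_nhdsWithin]
      with x hx (hx0 : 0 < x)
    rw [abs_of_pos hx0] at hx
    rw [Real.rpow_sub hx0, div_eq_inv_mul, mul_smul, ← hx, smul_smul, Real.rpow_intCast,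
      inv_mul_cancel₀ (zpow_ne_zero m hx0.ne'), one_smul]
  have hp : p = m := sub_eq_zero.1 <| exponent_eq_zero_of_eventuallyEq_rpow_smul
    (hf.mono_left nhdsWithin_le_nhds) (hg.mono_left nhdsWithin_le_nhds) hf0 hg0 hpos
  refine ⟨by_contra fun hm => hf0 ?_, hp⟩
  have hfg_pos : f 0 = g 0 := by
    refine tendsto_nhds_unique_of_eventuallyEq (hf.mono_left nhdsWithin_le_nhds)
      (hg.mono_left nhdsWithin_le_nhds) (hpos.mono fun x hx => ?_)
    rw [hx, hp, sub_self, Real.rpow_zero, one_smul]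
  have hfg_neg : f 0 = -g 0 := by
    refine tendsto_nhds_unique_of_eventuallyEq (hf.mono_left nhdsWithin_le_nhds)
      (hg.neg.mono_left (nhdsWithin_le_nhds (s := Set.Iio 0))) ?_
    filter_upwards [hfg.filter_mono (nhdsLT_le_nhdsNE 0), self_mem_nhdsWithin]
      with x hx (hx0 : x < 0)
    rw [hp, Real.rpow_intCast, abs_of_neg hx0, (Int.not_even_iff_odd.1 hm).neg_zpow, neg_smul,
      ← smul_neg] at hx
    exact smul_right_injective E (zpow_ne_zero m hx0.ne) hx
  have htwo : (2 : ℝ) • f 0 = 0 := by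
    rw [two_smul]
    nth_rewrite 1 [hfg_neg]
    rw [hfg_pos, neg_add_cancel]
  exact (smul_eq_zero.1 htwo).resolve_left two_ne_zero

lemma exists_int_of_eventuallyEq_abs_rpow_mul_smul {F A : ℝ → E} {V : ℝ → ℝ} {p : ℝ}
    (hF : AnalyticAt ℝ F 0) (hA : AnalyticAt ℝ A 0) (hV : ContinuousAt V 0) (hV0 : V 0 ≠ 0)
    (hFA : ∀ᶠ x in 𝓝 0, F x = (|x| ^ p * V x) • A x) (hA0 : ¬∀ᶠ x in 𝓝 0, A x = 0) :
    ∃ k : ℤ, p = 2 * k := by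
  have hF0 : ¬∀ᶠ x in 𝓝 0, F x = 0 := fun hF0 => by
    refine hA0 (hA.frequently_zero_iff_eventually_zero.1 (Eventually.frequently ?_))
    filter_upwards [(hF0.and (hFA.and (hV.eventually_ne hV0))).filter_mono nhdsWithin_le_nhds,
      self_mem_nhdsWithin] with x ⟨hx, hxA, hxV⟩ hx0
    rw [hx] at hxA
    have hrpow : |x| ^ p ≠ 0 := (Real.rpow_pos_of_pos (abs_pos.2 hx0) p).ne'
    exact (smul_eq_zero.1 hxA.symm).resolve_left (mul_ne_zero hrpow hxV)
  obtain ⟨n, f, hf, hf0, hFf⟩ := hF.exists_eventuallyEq_pow_smul_nonzero_iff.2 hF0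
  obtain ⟨k, g, hg, hg0, hAg⟩ := hA.exists_eventuallyEq_pow_smul_nonzero_iff.2 hA0
  have hfg : ∀ᶠ x in 𝓝[≠] 0, x ^ (n - k : ℤ) • f x = |x| ^ p • V x • g x := by
    filter_upwards [(hFA.and (hFf.and hAg)).filter_mono nhdsWithin_le_nhds, self_mem_nhdsWithin]
      with x ⟨hx, hxf, hxg⟩ hx0
    rw [hxf, hxg, sub_zero, smul_comm, mul_smul] at hx
    rw [zpow_sub₀ hx0, zpow_natCast, zpow_natCast, div_eq_inv_mul, mul_smul, hx,
      inv_smul_smul₀ (pow_ne_zero k hx0)]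
  obtain ⟨⟨j, hj⟩, hp⟩ := exists_even_of_zpow_smul_eventuallyEq_abs_rpow_smul hf.continuousAt
    (hV.smul hg.continuousAt) hf0 (smul_ne_zero hV0 hg0) hfg
  exact ⟨j, by rw [hp, hj]; push_cast; ring⟩

end AnalyticOrder

section UniqueContinuation

open Filter Topology

lemma analyticOnNhd_latticeFourier_line {ι : Type*} [Fintype ι] {f : (ι → ℤ) → ℝ}
    (hf : f.support.Finite) (w : ι → ℝ) :
    AnalyticOnNhd ℝ (fun x : ℝ => latticeFourier f fun i => Circle.exp (x * w i)) Set.univ := by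
  have hsum : (fun x : ℝ => latticeFourier f fun i => Circle.exp (x * w i)) =
      fun x => ∑ m ∈ hf.toFinset,
        (f m : ℂ) * Complex.exp (((∑ i, m i * (x * w i) : ℝ) : ℂ) * Complex.I) := by
    ext x
    rw [latticeFourier, tsum_eq_sum (s := hf.toFinset) (by simp +contextual)]
    simp only [latticeChar_circleExp, Circle.coe_exp]
  rw [hsum]
  refine hf.toFinset.analyticOnNhd_fun_sum fun m _ x _ => ?_
  have hphase : AnalyticAt ℝ (fun x : ℝ => ∑ i, m i * (x * w i)) x := by fun_prop
  exact analyticAt_const.mul (analyticAt_cexp.restrictScalars.comp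
    (((Complex.ofRealCLM.analyticAt _).comp hphase).mul analyticAt_const))

variable {d : ℕ} {h s : ℝ} {u : (Fin d → ℤ) → ℝ}

lemma latticeFourier_line_eq_zero (hh : 0 < h) (hs : s ∈ Set.Ioo 0 1) (hu : u.support.Finite)
    (hLu : (fracLap d h s u).support.Finite) {w : Fin d → ℝ} (hw : w ≠ 0) (x : ℝ) :
    latticeFourier u (fun i => Circle.exp (x * w i)) = 0 := by
  have hU := analyticOnNhd_latticeFourier_line hu w
  have hLU := analyticOnNhd_latticeFourier_line hLu w
  refine hU.eqOn_zero_of_preconnected_of_eventuallyEq_zero isPreconnected_univ (Set.mem_univ 0)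
    (by_contra fun hU0 => ?_) (Set.mem_univ x)
  let S (x : ℝ) : ℝ := ∑ i, (w i * Real.sinc (x * w i / 2)) ^ 2
  have hS : Continuous S := by fun_prop
  have hS0 : 0 < S 0 := by
    obtain ⟨i, hi⟩ := Function.ne_iff.1 hw
    simp only [S, zero_mul, zero_div, Real.sinc_zero, mul_one]
    exact Finset.sum_pos' (fun _ _ => sq_nonneg _) ⟨i, Finset.mem_univ i, sq_pos_of_ne_zero hi⟩
  have hV : ContinuousAt (fun x => h ^ (-(2 * s)) * S x ^ s) 0 :=
    (hS.continuousAt.rpow_const (Or.inl hS0.ne')).const_mul _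
  have hfactor (x : ℝ) : latticeFourier (fracLap d h s u) (fun i => Circle.exp (x * w i)) =
      (|x| ^ (2 * s) * (h ^ (-(2 * s)) * S x ^ s)) •
        latticeFourier u (fun i => Circle.exp (x * w i)) := by
    rw [latticeFourier_fracLap h hs (summable_of_hasFiniteSupport hu),
      laplaceSymbol_circleExp_rpow, Complex.real_smul, mul_left_comm]
  obtain ⟨k, hk⟩ := exists_int_of_eventuallyEq_abs_rpow_mul_smul (hLU 0 (Set.mem_univ 0))
    (hU 0 (Set.mem_univ 0)) hV (by positivity) (.of_forall hfactor) hU0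
  have hsk : s = k := by linarith
  have hk0 : 0 < k := by exact_mod_cast hsk ▸ hs.1
  have hk1 : k < 1 := by exact_mod_cast hsk ▸ hs.2
  omega

theorem eq_zero_of_finite_support_fracLap (hd : 0 < d) (hh : 0 < h) (hs : s ∈ Set.Ioo 0 1)
    (hu : u.support.Finite) (hLu : (fracLap d h s u).support.Finite) : u = 0 := by
  refine eq_zero_of_latticeFourier_eq_zero hu fun z => ?_
  let w (i : Fin d) : ℝ := Complex.arg (z i) + 2 * Real.pi
  have hw : w ≠ 0 := fun hw => by
    have hw0 : w ⟨0, hd⟩ = 0 := congrFun hw _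
    linarith [Complex.neg_pi_lt_arg (z ⟨0, hd⟩), Real.pi_pos]
  have hwz : (fun i => Circle.exp (1 * w i)) = z := by
    ext i
    rw [one_mul, Circle.exp_add_two_pi, Circle.exp_arg]
  exact hwz ▸ latticeFourier_line_eq_zero hh hs hu hLu hw 1

end UniqueContinuation

lemma finite_setOf_sqrt_sum_sq_lt {ι : Type*} [Fintype ι] {h : ℝ} (hh : 0 < h) (R : ℝ) :
    {j : ι → ℤ | Real.sqrt (∑ i, (h * (j i : ℝ)) ^ 2) < R}.Finite := by
  obtain ⟨N, hN⟩ := exists_nat_ge (R / h)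
  refine (Set.Finite.pi' fun _ => Set.finite_Icc (-(N : ℤ)) N).subset fun j hj i => ?_
  have hi : |h * j i| ≤ Real.sqrt (∑ i, (h * (j i : ℝ)) ^ 2) :=
    Real.abs_le_sqrt (Finset.single_le_sum (f := fun i => (h * (j i : ℝ)) ^ 2)
      (fun _ _ => sq_nonneg _) (Finset.mem_univ i))
  rw [abs_mul, abs_of_pos hh] at hi
  have hlt : |(j i : ℝ)| < R / h := (lt_div_iff₀' hh).2 (hi.trans_lt hj)
  exact abs_le.1 (by exact_mod_cast hlt.le.trans hN)

/-- Global unique continuation from the exterior: if `u` and `(-Δ_d)^s u`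
both vanish at all lattice points `hj` with `|hj| ≥ R` (where `R ≥ h`), then `u ≡ 0`. -/
theorem exterior_global_UCP (d : ℕ) (hd : 1 ≤ d) (h s R : ℝ) (hh : 0 < h)
    (hs : s ∈ Set.Ioo (0 : ℝ) 1) (hR : h ≤ R) (u : (Fin d → ℤ) → ℝ)
    (hvan : ∀ j : Fin d → ℤ, R ≤ Real.sqrt (∑ i, (h * (j i : ℝ)) ^ 2) →
      u j = 0 ∧ fracLap d h s u j = 0) :
    ∀ j : Fin d → ℤ, u j = 0 := by
  have hfinite : {j : Fin d → ℤ | Real.sqrt (∑ i, (h * (j i : ℝ)) ^ 2) < R}.Finite :=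
    finite_setOf_sqrt_sum_sq_lt hh R
  have hu : u.support.Finite := hfinite.subset fun j hj => not_le.1 fun hj_ge => hj (hvan j hj_ge).1
  have hLu : (fracLap d h s u).support.Finite :=
    hfinite.subset fun j hj => not_le.1 fun hj_ge => hj (hvan j hj_ge).2
  exact congrFun (eq_zero_of_finite_support_fracLap hd hh hs hu hLu)
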